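/- Let G be a simple 2-connected graph with minimum degree δ. Then G has a cycle of length at least min{|V(G)|, 2δ}. -/

import Mathlib

open SimpleGraph

/-- An edge-cut of `G`: a set of edges of `G` whose deletion disconnects `G`. -/
def IsEdgeCut {V : Type*} (G : SimpleGraph V) (S : Set (Sym2 V)) : Prop :=
  S ⊆ G.edgeSet ∧ ¬ (G.deleteEdges S).Connected

/-- A bond: a minimal nonempty edge-cut. -/
def IsBond {V : Type*} (G : SimpleGraph V) (S : Set (Sym2 V)) : Prop :=
  S.Nonempty ∧ IsEdgeCut G S ∧ ∀ T ⊂ S, T.Nonempty → ¬ IsEdgeCut G T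

/-- A largest bond: a bond of maximum size. -/
def IsLargestBond {V : Type*} (G : SimpleGraph V) (S : Set (Sym2 V)) : Prop :=
  IsBond G S ∧ ∀ T, IsBond G T → T.ncard ≤ S.ncard

/-- The set of edges of `G` between `X` and its complement. -/
def crossEdges {V : Type*} (G : SimpleGraph V) (X : Set V) : Set (Sym2 V) :=
  {e ∈ G.edgeSet | ∃ x ∈ X, ∃ y ∈ Xᶜ, e = s(x, y)}

/-- `G` is 2-connected: at least 3 vertices and connected after deleting any ≤ 1 vertices. -/
def TwoConnected {V : Type*} (G : SimpleGraph V) : Prop :=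
  3 ≤ Nat.card V ∧ ∀ s : Set V, s.ncard ≤ 1 → (G.induce sᶜ).Connected

/-- `G` is 3-connected: at least 4 vertices and connected after deleting any ≤ 2 vertices. -/
def ThreeConnected {V : Type*} (G : SimpleGraph V) : Prop :=
  4 ≤ Nat.card V ∧ ∀ s : Set V, s.ncard ≤ 2 → (G.induce sᶜ).Connected

/-- A longest cycle of `G`. -/
def IsLongestCycle {V : Type*} (G : SimpleGraph V) {v : V} (C : G.Walk v v) : Prop :=
  C.IsCycle ∧ ∀ (u : V) (D : G.Walk u u), D.IsCycle → D.length ≤ C.length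


/-- A list of distinct consecutive-adjacent vertices from `u` to `v`. -/
def IsPth {V : Type*} (G : SimpleGraph V) (u v : V) (l : List V) : Prop :=
  l.IsChain G.Adj ∧ l.Nodup ∧ l.head? = some u ∧ l.getLast? = some v

section basics
variable {V : Type*} {G : SimpleGraph V}

theorem IsPth.rev {u v : V} {l : List V} (h : IsPth G u v l) : IsPth G v u l.reverse := by
  obtain ⟨h1, h2, h3, h4⟩ := h
  refine ⟨?_, by simpa using h2, by simpa using h4, by simpa using h3⟩
  rw [List.isChain_reverse]
  exact h1.imp (fun a b hab => hab.symm)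

theorem IsPth.app {u v u' v' : V} {l l' : List V} (h : IsPth G u v l) (h' : IsPth G u' v' l')
    (ha : G.Adj v u') (hd : ∀ z ∈ l, z ∉ l') : IsPth G u v' (l ++ l') := by
  obtain ⟨h1, h2, h3, h4⟩ := h
  obtain ⟨h1', h2', h3', h4'⟩ := h'
  refine ⟨?_, ?_, ?_, ?_⟩
  · rw [List.isChain_append]
    refine ⟨h1, h1', ?_⟩
    rw [h4, h3']
    rintro a ⟨⟩ b ⟨⟩
    exact ha
  · rw [List.nodup_append']
    exact ⟨h2, h2', fun z hz hz' => hd z hz hz'⟩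
  · simp [h3]
  · simp [h4']

theorem IsPth.sing (u : V) : IsPth G u u [u] := by simp [IsPth]

theorem IsPth.head_mem {u v : V} {l : List V} (h : IsPth G u v l) : u ∈ l :=
  List.mem_of_mem_head? h.2.2.1

theorem IsPth.last_mem {u v : V} {l : List V} (h : IsPth G u v l) : v ∈ l :=
  List.mem_of_mem_getLast? h.2.2.2

/-- Strip both ends. -/
theorem IsPth.strip {u v : V} {l : List V} (h : IsPth G u v l) (hl : 3 ≤ l.length) :
    ∃ M s e, l = u :: (M ++ [v]) ∧ IsPth G s e M ∧ G.Adj u s ∧ G.Adj e v := by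
  obtain ⟨h1, h2, h3, h4⟩ := h
  match l, hl with
  | a :: t, hl =>
    obtain rfl : a = u := by simpa using h3
    rcases List.eq_nil_or_concat t with rfl | ⟨M, b, rfl⟩
    · simp at hl
    · obtain rfl : b = v := by
        rw [List.concat_eq_append, ← List.cons_append, List.getLast?_append_of_ne_nil _ (by simp)] at h4
        simpa using h4
      have hM : M ≠ [] := by rintro rfl; simp at hl
      simp only [List.concat_eq_append] at *
      refine ⟨M, M.head hM, M.getLast hM, rfl, ⟨?_, ?_, ?_, ?_⟩, ?_, ?_⟩
      · exact (List.isChain_cons.1 h1).2.left_of_append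
      · simp at h2; exact (List.nodup_append'.1 h2.2).1
      · simp [List.head?_eq_some_head hM]
      · simp [List.getLast?_eq_some_getLast hM]
      · exact (List.isChain_cons.1 h1).1 _ (by simp [List.head?_eq_some_head hM])
      · exact (List.isChain_append.1 (List.isChain_cons.1 h1).2).2.2 _
          (by simp [List.getLast?_eq_some_getLast hM]) _ (by simp)

theorem IsPth.cyc {u v : V} {l : List V} (h : IsPth G u v l) (ha : G.Adj v u)
    (hl : 3 ≤ l.length) : ∃ (w : V) (C : G.Walk w w), C.IsCycle ∧ C.length = l.length := by
  obtain ⟨h1, h2, h3, h4⟩ := h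
  have hne : l ≠ [] := by rintro rfl; simp at hl
  have hh : l.head hne = u := by
    rw [List.head?_eq_some_head hne] at h3; simpa using h3
  have hg : l.getLast hne = v := by
    rw [List.getLast?_eq_some_getLast hne] at h4; simpa using h4
  subst hh hg
  let p := Walk.ofSupport l hne h1
  have hp : p.IsPath := by
    rw [Walk.isPath_def, Walk.support_ofSupport]; exact h2
  have hpl : p.length = l.length - 1 := Walk.length_ofSupport hne h1
  refine ⟨_, Walk.cons ha p, ?_, by rw [Walk.length_cons]; omega⟩
  rw [Walk.cons_isCycle_iff]
  refine ⟨hp, fun he => ?_⟩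
  rw [Sym2.eq_swap] at he
  have := hp.length_eq_one_of_mem_edges he
  omega

/-- Splitting a path at a vertex. -/
theorem IsPth.split {u v z : V} {l : List V} (h : IsPth G u v l) (hz : z ∈ l) :
    ∃ R1 R2, l = R1 ++ R2 ∧ IsPth G u z R1 ∧ IsPth G z v (z :: R2) ∧ (∀ w ∈ R1, w ∉ R2) ∧
      (z ≠ v → v ∈ R2) := by
  obtain ⟨h1, h2, h3, h4⟩ := h
  obtain ⟨s, t, rfl⟩ := List.append_of_mem hz
  refine ⟨s ++ [z], t, by simp, ⟨?_, ?_, ?_, ?_⟩, ⟨?_, ?_, ?_, ?_⟩, ?_, ?_⟩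
  · have : (s ++ [z] ++ t).IsChain G.Adj := by simpa using h1
    exact this.left_of_append
  · have : (s ++ [z] ++ t).Nodup := by simpa using h2
    exact (List.nodup_append'.1 this).1
  · rw [← h3]; cases s <;> simp
  · simp
  · exact h1.right_of_append
  · exact (List.nodup_append'.1 h2).2.1
  · simp
  · rw [← h4, List.getLast?_append_of_ne_nil _ (by simp)]
  · have : (s ++ [z] ++ t).Nodup := by simpa using h2
    exact fun w hw hw' => (List.nodup_append'.1 this).2.2 hw hw'
  · intro hzv
    rw [List.getLast?_append_of_ne_nil _ (by simp)] at h4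
    have := List.mem_of_mem_getLast? h4
    simp at this
    grind

/-- A cyclic list can be opened at any vertex. -/
theorem IsPth.rotate {u v z : V} {l : List V} (h : IsPth G u v l) (ha : G.Adj v u) (hz : z ∈ l) :
    ∃ e l', IsPth G z e l' ∧ (∀ w, w ∈ l' ↔ w ∈ l) ∧ l'.length = l.length := by
  obtain ⟨h1, h2, h3, h4⟩ := h
  obtain ⟨s, t, rfl⟩ := List.append_of_mem hz
  rcases List.eq_nil_or_concat s with rfl | ⟨s', b, rfl⟩
  · exact ⟨v, z :: t, ⟨by simpa using h1, by simpa using h2, by simp, by simpa using h4⟩,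
      by simp, by simp⟩
  · have hzt : IsPth G z v (z :: t) := ⟨h1.right_of_append, (List.nodup_append'.1 h2).2.1, by simp,
      by rw [← h4, List.getLast?_append_of_ne_nil _ (by simp)]⟩
    have hs : IsPth G u b (s'.concat b) := ⟨h1.left_of_append, (List.nodup_append'.1 h2).1,
      by rw [← h3]; cases s' <;> simp, by simp⟩
    refine ⟨b, _, hzt.app hs ha (fun w hw hw' => (List.nodup_append'.1 h2).2.2 hw' hw), ?_, ?_⟩
    · intro w; simp only [List.mem_append]; tauto
    · simp only [List.length_append]; omega

/-- The bridge lemma. -/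
theorem bridge (h2 : TwoConnected G) (w : V) (A B : Set V) {a b : V} (ha : a ∈ A) (hb : b ∈ B)
    (haw : a ≠ w) (hbw : b ≠ w) (_hAB : ∀ z ∈ A, z ∉ B) :
    ∃ z y l, IsPth G z y (z :: l) ∧ z ∈ A ∧ y ∈ B ∧
      w ∉ z :: l ∧ (∀ v ∈ l, v ∉ A) ∧ (∀ v ∈ z :: l, v ∈ B → v = y) := by
  classical
  have key : ∃ n : ℕ, ∃ l z y, l.length = n ∧ IsPth G z y l ∧ z ∈ A ∧ y ∈ B ∧ w ∉ l := by
    have hc := h2.2 {w} (by simp)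
    obtain ⟨p⟩ := hc.preconnected ⟨a, by simpa using haw⟩ ⟨b, by simpa using hbw⟩
    let q := p.toPath.1.map (Embedding.induce (G := G) ({w}ᶜ : Set V)).toHom
    have hq : q.IsPath := Walk.IsPath.map
      (Embedding.induce (G := G) ({w}ᶜ : Set V)).injective p.toPath.2
    refine ⟨_, q.support, a, b, rfl, ⟨q.isChain_adj_support, hq.support_nodup, ?_, ?_⟩, ha, hb, ?_⟩
    · rw [List.head?_eq_some_head q.support_ne_nil, Walk.head_support]; rfl
    · rw [List.getLast?_eq_some_getLast q.support_ne_nil, Walk.getLast_support]; rfl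
    · simp only [q, Walk.support_map, List.mem_map, not_exists, not_and]
      rintro ⟨c, hc⟩ _ h
      exact hc h
  obtain ⟨l, z, y, hl, hp, hz, hy, hw⟩ := Nat.find_spec key
  have hmin : ∀ l' z' y', IsPth G z' y' l' → z' ∈ A → y' ∈ B → w ∉ l' → l.length ≤ l'.length := by
    intro l' z' y' h1 h3 h4 h5
    rw [hl]
    exact Nat.find_min' key ⟨l', z', y', rfl, h1, h3, h4, h5⟩
  obtain ⟨l, rfl⟩ : ∃ l', l = z :: l' := by
    have := hp.2.2.1
    cases l with
    | nil => simp at this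
    | cons c t => simp at this; exact ⟨t, by rw [this]⟩
  refine ⟨z, y, l, hp, hz, hy, hw, ?_, ?_⟩
  · intro v hv hvA
    obtain ⟨R1, R2, he, -, hs, hdis, -⟩ := hp.split (List.mem_cons_of_mem z hv)
    have hvz : v ≠ z := by rintro rfl; exact (List.nodup_cons.1 hp.2.1).1 hv
    have := hmin _ _ _ hs hvA hy (by grind)
    have h6 := congrArg List.length he
    simp only [List.length_cons, List.length_append] at h6 this
    match R1, he with
    | [], he => simp at he; grind [IsPth]
    | [c], he => grind [IsPth]
    | c :: d :: t, he => simp at h6; omega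
  · intro v hv hvB
    by_contra hne
    obtain ⟨R1, R2, he, hs, -, hdis, hm⟩ := hp.split hv
    have := hmin _ _ _ hs hz hvB (by grind)
    have h6 := congrArg List.length he
    simp only [List.length_cons, List.length_append] at h6 this
    have := List.length_pos_of_mem (hm hne)
    omega

end basics

/-- `x 0, …, x m` is a path in `G`. -/
structure PF {V : Type*} (G : SimpleGraph V) (x : ℕ → V) (m : ℕ) : Prop where
  inj : ∀ i ≤ m, ∀ j ≤ m, x i = x j → i = j
  adj : ∀ i < m, G.Adj (x i) (x (i + 1))

/-- The segment `x i, …, x j`. -/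
def seg {V : Type*} (x : ℕ → V) (i j : ℕ) : List V := (List.range' i (j + 1 - i)).map x

section pathfun
variable {V : Type*} {G : SimpleGraph V} {x : ℕ → V} {m : ℕ}

theorem mem_seg {i j : ℕ} {v : V} : v ∈ seg x i j ↔ ∃ k, i ≤ k ∧ k ≤ j ∧ x k = v := by
  simp only [seg, List.mem_map, List.mem_range'_1]
  constructor
  · rintro ⟨k, hk, rfl⟩; exact ⟨k, by omega, by omega, rfl⟩
  · rintro ⟨k, h1, h2, rfl⟩; exact ⟨k, by omega, rfl⟩

theorem length_seg {i j : ℕ} : (seg x i j).length = j + 1 - i := by simp [seg]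

theorem PF.seg_pth (hx : PF G x m) {i j : ℕ} (hij : i ≤ j) (hj : j ≤ m) :
    IsPth G (x i) (x j) (seg x i j) := by
  induction j, hij using Nat.le_induction with
  | base =>
    have : seg x i i = [x i] := by simp [seg]
    rw [this]; exact IsPth.sing _
  | succ j hij ih =>
    have : seg x i (j + 1) = seg x i j ++ [x (j + 1)] := by
      have h1 : j + 1 + 1 - i = (j + 1 - i) + 1 := by omega
      have h2 : i + (j + 1 - i) = j + 1 := by omega
      simp [seg, h1, List.range'_concat, h2]
    rw [this]
    refine (ih (by omega)).app (IsPth.sing _) (hx.adj j (by omega)) ?_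
    intro z hz hz'
    obtain ⟨k, h1, h2, rfl⟩ := mem_seg.1 hz
    have := hx.inj k (by omega) (j + 1) hj (by simpa using hz')
    omega

theorem PF.reverse (hx : PF G x m) : PF G (fun i => x (m - i)) m where
  inj i hi j hj h := by
    have := hx.inj (m - i) (by omega) (m - j) (by omega) h
    omega
  adj i hi := by
    have := hx.adj (m - (i + 1)) (by omega)
    rw [show m - (i + 1) + 1 = m - i by omega] at this
    exact this.symm

theorem PF.sp_aux (hx : PF G x m) {a p : ℕ} (ha : a ≤ m) (hp : p < a) (h0 : G.Adj (x 0) (x a)) :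
    ∃ l, IsPth G (x a) (x p) l ∧ (∀ v ∈ l, ∃ k ≤ a, x k = v) ∧ x 0 ∈ l ∧
      ∀ k ≤ a, G.Adj (x 0) (x k) → x k ∈ l := by
  classical
  have key : ∃ r, p < r ∧ G.Adj (x 0) (x r) := ⟨a, hp, h0⟩
  obtain ⟨h1, h2⟩ := Nat.find_spec key
  have h3 : Nat.find key ≤ a := Nat.find_min' key ⟨hp, h0⟩
  have h4 : ∀ k, p < k → G.Adj (x 0) (x k) → Nat.find key ≤ k :=
    fun k hk hk' => Nat.find_min' key ⟨hk, hk'⟩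
  generalize Nat.find key = r at *
  refine ⟨(seg x r a).reverse ++ seg x 0 p, ?_, ?_, ?_, ?_⟩
  · refine (hx.seg_pth h3 ha).rev.app (hx.seg_pth (Nat.zero_le p) (by omega)) h2.symm ?_
    intro z hz hz'
    rw [List.mem_reverse, mem_seg] at hz
    rw [mem_seg] at hz'
    obtain ⟨k, hk1, hk2, rfl⟩ := hz
    obtain ⟨k', hk1', hk2', h⟩ := hz'
    have := hx.inj k' (by omega) k (by omega) h
    omega
  · intro v hv
    rw [List.mem_append, List.mem_reverse, mem_seg, mem_seg] at hv
    rcases hv with ⟨k, h5, h6, h7⟩ | ⟨k, h5, h6, h7⟩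
    · exact ⟨k, by omega, h7⟩
    · exact ⟨k, by omega, h7⟩
  · rw [List.mem_append, mem_seg]
    exact Or.inr ⟨0, by omega, by omega, rfl⟩
  · intro k hk hk'
    rw [List.mem_append, List.mem_reverse, mem_seg, mem_seg]
    by_cases hkp : k ≤ p
    · exact Or.inr ⟨k, by omega, hkp, rfl⟩
    · exact Or.inl ⟨k, h4 k (by omega) hk', hk, rfl⟩

theorem PF.sp (hx : PF G x m) {a α β : ℕ} (ha : a ≤ m) (hα : α ≤ a) (hβ : β ≤ a) (hne : α ≠ β)
    (hor : α = a ∨ β = a) (h0 : G.Adj (x 0) (x a)) :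
    ∃ l, IsPth G (x α) (x β) l ∧ (∀ v ∈ l, ∃ k ≤ a, x k = v) ∧ x 0 ∈ l ∧
      ∀ k ≤ a, G.Adj (x 0) (x k) → x k ∈ l := by
  rcases hor with rfl | rfl
  · exact hx.sp_aux ha (by omega) h0
  · obtain ⟨l, h1, h2, h3, h4⟩ := hx.sp_aux (p := α) ha (by omega) h0
    exact ⟨l.reverse, h1.rev, by simpa using h2, by simpa using h3, by simpa using h4⟩

/-- Two disjoint linking paths. -/
structure Link (G : SimpleGraph V) (x : ℕ → V) (m a t : ℕ) (R R' : List V) (α β q : ℕ) : Prop where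
  hR : IsPth G (x α) (x t) R
  hR' : IsPth G (x β) (x q) R'
  hα : α ≤ a
  hβ : β ≤ a
  hor : α = a ∨ β = a
  hq : t < q
  hqm : q ≤ m
  dis : ∀ v ∈ R, v ∉ R'
  lowR : ∀ k ≤ a, x k ∈ R → k = α
  lowR' : ∀ k ≤ a, x k ∈ R' → k = β
  highR : ∀ k ≤ m, t ≤ k → x k ∈ R → k = t
  highR' : ∀ k ≤ m, t ≤ k → x k ∈ R' → k = q

theorem PF.link (hx : PF G x m) (h2 : TwoConnected G) {a : ℕ} (ha : 0 < a) (t : ℕ) (hat : a ≤ t) :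
    t < m → ∃ R R' α β q, Link G x m a t R R' α β q := by
  induction t, hat using Nat.le_induction with
  | base =>
    intro hm
    obtain ⟨z, y, l, hp, ⟨k0, hk0, rfl⟩, ⟨q, hq, hqm, rfl⟩, hw, hA, hB⟩ :=
      bridge h2 (x a) {v | ∃ k < a, x k = v} {v | ∃ k, a < k ∧ k ≤ m ∧ x k = v}
      (a := x 0) (b := x m) ⟨0, ha, rfl⟩ ⟨m, hm, le_rfl, rfl⟩
      (fun h => by have := hx.inj 0 (by omega) a (by omega) h; omega)
      (fun h => by have := hx.inj m (by omega) a (by omega) h; omega)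
      (by
        rintro _ ⟨k, hk, rfl⟩ ⟨k', h1, h3, h⟩
        have := hx.inj k' (by omega) k (by omega) h
        omega)
    refine ⟨[x a], x k0 :: l, a, k0, q, ⟨IsPth.sing _, hp, le_rfl, hk0.le, Or.inl rfl, hq, hqm,
      ?_, ?_, ?_, ?_, ?_⟩⟩
    · simpa using hw
    · intro k hk h
      exact hx.inj _ (by omega) _ (by omega) (by simpa using h)
    · intro k hk h
      rcases List.mem_cons.1 h with h' | h'
      · exact hx.inj _ (by omega) _ (by omega) h'
      · have hka : k ≠ a := by rintro rfl; exact hw h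
        exact absurd ⟨k, by omega, rfl⟩ (hA _ h')
    · intro k hk _ h
      exact hx.inj _ (by omega) _ (by omega) (by simpa using h)
    · intro k hk hak h
      have hka : k ≠ a := by rintro rfl; exact hw h
      exact hx.inj _ hk _ hqm (hB _ h ⟨k, by omega, hk, rfl⟩)
  | succ t hat ih =>
    intro hm
    obtain ⟨R, R', α, β, q, L⟩ := ih (by omega)
    have hR1 : x (t + 1) ∉ R := fun h => by have := L.highR _ (by omega) (by omega) h; omega
    have hext : IsPth G (x α) (x (t + 1)) (R ++ [x (t + 1)]) :=
      L.hR.app (IsPth.sing _) (hx.adj t (by omega)) (by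
        intro z hz hz'
        rw [List.mem_singleton] at hz'
        subst hz'; exact hR1 hz)
    have hextlow : ∀ k ≤ a, x k ∈ R ++ [x (t + 1)] → k = α := by
      intro k hk h
      rw [List.mem_append, List.mem_singleton] at h
      rcases h with h | h
      · exact L.lowR k hk h
      · have := hx.inj _ (by omega) _ (by omega) h
        omega
    have hexthigh : ∀ k ≤ m, t + 1 ≤ k → x k ∈ R ++ [x (t + 1)] → k = t + 1 := by
      intro k hk hk' h
      rw [List.mem_append, List.mem_singleton] at h
      rcases h with h | h
      · have := L.highR k hk (by omega) h
        omega
      · exact hx.inj _ (by omega) _ (by omega) h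
    by_cases hqt : q = t + 1
    · subst hqt
      obtain ⟨z, y, l, hp, hzA, ⟨q, hq, hqm, rfl⟩, hw, hA, hB⟩ :=
        bridge h2 (x (t + 1)) {v | v ∈ R ∨ v ∈ R' ∨ ∃ k ≤ a, x k = v}
        {v | ∃ k, t + 1 < k ∧ k ≤ m ∧ x k = v}
        (a := x 0) (b := x m) (Or.inr (Or.inr ⟨0, by omega, rfl⟩)) ⟨m, hm, le_rfl, rfl⟩
        (fun h => by have := hx.inj 0 (by omega) _ (by omega) h; omega)
        (fun h => by have := hx.inj m (by omega) _ (by omega) h; omega)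
        (by
          rintro v hv ⟨k', h1, h3, rfl⟩
          rcases hv with hv | hv | ⟨k, hk, h⟩
          · have := L.highR _ h3 (by omega) hv; omega
          · have := L.highR' _ h3 (by omega) hv; omega
          · have := hx.inj k (by omega) k' (by omega) h
            omega)
      have hzw : z ≠ x (t + 1) := by rintro rfl; exact hw (by simp)
      have hwl : x (t + 1) ∉ l := fun h => hw (List.mem_cons_of_mem _ h)
      have hlA : ∀ v ∈ l, v ∉ R ∧ v ∉ R' ∧ ∀ k ≤ a, x k ≠ v := by
        intro v hv
        have := hA v hv
        refine ⟨fun h => this (Or.inl h), fun h => this (Or.inr (Or.inl h)),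
          fun k hk h => this (Or.inr (Or.inr ⟨k, hk, h⟩))⟩
      have hDhigh : ∀ k ≤ m, t + 1 ≤ k → x k ∈ z :: l → k = q := by
        intro k hk hk' h
        have hka : k ≠ t + 1 := by rintro rfl; exact hw h
        exact hx.inj _ hk _ hqm (hB _ h ⟨k, by omega, hk, rfl⟩)
      have hzq : z ≠ x q := by
        rintro rfl
        rcases hzA with hv | hv | ⟨k, hk, h⟩
        · have := L.highR _ hqm (by omega) hv; omega
        · have := L.highR' _ hqm (by omega) hv; omega
        · have := hx.inj k (by omega) q (by omega) h
          omega
      -- gluing the bridge onto an initial segment of a path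
      have glue : ∀ (u e : V) (S : List V), IsPth G u e S → z ∈ S → (∀ v ∈ S, v ∈ R ∨ v ∈ R') →
          z ≠ e → ∃ S', IsPth G u (x q) S' ∧ (∀ v ∈ S', (v ∈ S ∧ v ≠ e) ∨ v ∈ l) := by
        intro u e S hS hz hSR hze
        obtain ⟨R1, R2, rfl, hR1', -, hdis, he⟩ := hS.split hz
        have hl3 : l ≠ [] := by
          rintro rfl
          have := hp.2.2.2
          simp at this
          exact hzq this
        have hlp : IsPth G (l.head hl3) (x q) l := by
          obtain ⟨g1, g2, g3, g4⟩ := hp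
          refine ⟨(List.isChain_cons.1 g1).2, (List.nodup_cons.1 g2).2,
            List.head?_eq_some_head hl3, ?_⟩
          rw [← g4, show z :: l = [z] ++ l from rfl, List.getLast?_append_of_ne_nil _ hl3]
        refine ⟨R1 ++ l, hR1'.app hlp ?_ ?_, ?_⟩
        · exact (List.isChain_cons.1 hp.1).1 _ (List.head?_eq_some_head hl3)
        · intro v hv hv'
          have h1 := hSR v (List.mem_append_left _ hv)
          have h3 := hlA v hv'
          tauto
        · intro v hv
          rcases List.mem_append.1 hv with hv | hv
          · refine Or.inl ⟨List.mem_append_left _ hv, ?_⟩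
            rintro rfl
            exact hdis _ hv (he hze)
          · exact Or.inr hv
      by_cases hzR : z ∈ R
      · by_cases hzt : z = x t
        · -- extend `R` itself
          subst hzt
          have hD : ∀ v ∈ R ++ l, v ∈ R ∨ v ∈ l := fun v hv => List.mem_append.1 hv
          have hl3 : l ≠ [] := by
            rintro rfl
            have := hp.2.2.2
            simp at this
            exact hzq this
          have hlp : IsPth G (l.head hl3) (x q) l := by
            obtain ⟨g1, g2, g3, g4⟩ := hp
            refine ⟨(List.isChain_cons.1 g1).2, (List.nodup_cons.1 g2).2,
              List.head?_eq_some_head hl3, ?_⟩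
            rw [← g4, show x t :: l = [x t] ++ l from rfl, List.getLast?_append_of_ne_nil _ hl3]
          refine ⟨R', R ++ l, β, α, q, ⟨L.hR', L.hR.app hlp ?_ ?_, L.hβ, L.hα, L.hor.symm, hq, hqm,
            ?_, L.lowR', ?_, ?_, ?_⟩⟩
          · exact (List.isChain_cons.1 hp.1).1 _ (List.head?_eq_some_head hl3)
          · exact fun v hv hv' => (hlA v hv').1 hv
          · intro v hv hv'
            rcases hD v hv' with h | h
            · exact L.dis v h hv
            · exact (hlA v h).2.1 hv
          · intro k hk h
            rcases hD _ h with h | h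
            · exact L.lowR k hk h
            · exact absurd rfl ((hlA _ h).2.2 k hk)
          · exact fun k hk hk' h => L.highR' k hk (by omega) h
          · intro k hk hk' h
            rcases hD _ h with h | h
            · have := L.highR k hk (by omega) h; omega
            · exact hDhigh k hk hk' (List.mem_cons_of_mem _ h)
        · obtain ⟨S, hS, hSm⟩ := glue _ _ R L.hR hzR (fun v hv => Or.inl hv) hzt
          refine ⟨R', S, β, α, q, ⟨L.hR', hS, L.hβ, L.hα, L.hor.symm, hq, hqm,
            ?_, L.lowR', ?_, ?_, ?_⟩⟩
          · intro v hv hv'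
            rcases hSm v hv' with ⟨h, -⟩ | h
            · exact L.dis v h hv
            · exact (hlA v h).2.1 hv
          · intro k hk h
            rcases hSm _ h with ⟨h, -⟩ | h
            · exact L.lowR k hk h
            · exact absurd rfl ((hlA _ h).2.2 k hk)
          · exact fun k hk hk' h => L.highR' k hk (by omega) h
          · intro k hk hk' h
            rcases hSm _ h with ⟨h, -⟩ | h
            · have := L.highR k hk (by omega) h; omega
            · exact hDhigh k hk hk' (List.mem_cons_of_mem _ h)
      by_cases hzR' : z ∈ R'
      · obtain ⟨S, hS, hSm⟩ := glue _ _ R' L.hR' hzR' (fun v hv => Or.inr hv) hzw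
        refine ⟨R ++ [x (t + 1)], S, α, β, q, ⟨hext, hS, L.hα, L.hβ, L.hor, hq, hqm,
          ?_, hextlow, ?_, hexthigh, ?_⟩⟩
        · intro v hv hv'
          rw [List.mem_append, List.mem_singleton] at hv
          rcases hSm v hv' with ⟨h, h'⟩ | h
          · rcases hv with hv | hv
            · exact L.dis v hv h
            · exact h' hv
          · rcases hv with hv | hv
            · exact (hlA v h).1 hv
            · subst hv; exact hwl h
        · intro k hk h
          rcases hSm _ h with ⟨h, -⟩ | h
          · exact L.lowR' k hk h
          · exact absurd rfl ((hlA _ h).2.2 k hk)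
        · intro k hk hk' h
          rcases hSm _ h with ⟨h, h'⟩ | h
          · have := L.highR' k hk (by omega) h
            subst this; exact absurd rfl h'
          · exact hDhigh k hk hk' (List.mem_cons_of_mem _ h)
      · obtain ⟨k0, hk0, rfl⟩ : ∃ k ≤ a, x k = z := by
          rcases hzA with h | h | h
          · exact absurd h hzR
          · exact absurd h hzR'
          · exact h
        have hDlow : ∀ k ≤ a, x k ∈ x k0 :: l → k = k0 := by
          intro k hk h
          rcases List.mem_cons.1 h with h | h
          · exact hx.inj _ (by omega) _ (by omega) h
          · exact absurd rfl ((hlA _ h).2.2 k hk)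
        rcases L.hor with h | h
        · refine ⟨R ++ [x (t + 1)], x k0 :: l, α, k0, q, ⟨hext, hp, L.hα, hk0, Or.inl h, hq, hqm,
            ?_, hextlow, hDlow, hexthigh, hDhigh⟩⟩
          intro v hv hv'
          rw [List.mem_append, List.mem_singleton] at hv
          rcases hv with hv | hv
          · rcases List.mem_cons.1 hv' with rfl | h'
            · exact hzR hv
            · exact (hlA v h').1 hv
          · subst hv; exact hw hv'
        · refine ⟨R', x k0 :: l, β, k0, q, ⟨L.hR', hp, L.hβ, hk0, Or.inl h, hq, hqm,
            ?_, L.lowR', hDlow, fun k hk hk' h => L.highR' k hk (by omega) h, hDhigh⟩⟩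
          intro v hv hv'
          rcases List.mem_cons.1 hv' with rfl | h'
          · exact hzR' hv
          · exact (hlA v h').2.1 hv
    · have hq' := L.hq
      refine ⟨R ++ [x (t + 1)], R', α, β, q, ⟨hext, L.hR', L.hα, L.hβ, L.hor, by omega, L.hqm,
        ?_, hextlow, L.lowR', hexthigh, fun k hk hk' h => L.highR' k hk (by omega) h⟩⟩
      intro v hv hv'
      rw [List.mem_append, List.mem_singleton] at hv
      rcases hv with hv | hv
      · exact L.dis v hv hv'
      · subst hv
        have := L.highR' _ (by omega) (by omega) hv'
        omega

end pathfun

section main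
variable {V : Type*} [Fintype V] {G : SimpleGraph V}

theorem exists_longest [Nonempty V] : ∃ (x : ℕ → V) (m : ℕ), PF G x m ∧
    ∀ u v l, IsPth G u v l → l.length ≤ m + 1 := by
  classical
  let P : ℕ → Prop := fun n => ∃ u v l, IsPth G u v l ∧ l.length = n
  obtain ⟨w⟩ := ‹Nonempty V›
  have hb : ∀ u v l, IsPth G u v l → l.length ≤ Fintype.card V :=
    fun u v l h => h.2.1.length_le_card
  have h1 : P 1 := ⟨w, w, [w], IsPth.sing w, rfl⟩
  have hc : 1 ≤ Fintype.card V := hb _ _ _ (IsPth.sing w)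
  have hs := Nat.findGreatest_spec hc h1
  have hge : 1 ≤ Nat.findGreatest P (Fintype.card V) := Nat.le_findGreatest hc h1
  have hmax : ∀ u v l, IsPth G u v l → l.length ≤ Nat.findGreatest P (Fintype.card V) :=
    fun u v l h => Nat.le_findGreatest (hb _ _ _ h) ⟨u, v, l, h, rfl⟩
  generalize Nat.findGreatest P (Fintype.card V) = n at *
  obtain ⟨u, v, l, hp, rfl⟩ := hs
  refine ⟨fun i => l.getD i u, l.length - 1, ⟨?_, ?_⟩, ?_⟩
  · intro i hi j hj h
    have hi' : i < l.length := by omega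
    have hj' : j < l.length := by omega
    simp only [List.getD_eq_getElem _ _ hi', List.getD_eq_getElem _ _ hj'] at h
    exact (hp.2.1.getElem_inj_iff).1 h
  · intro i hi
    have hi' : i < l.length := by omega
    have hj' : i + 1 < l.length := by omega
    simp only [List.getD_eq_getElem _ _ hi', List.getD_eq_getElem _ _ hj']
    exact hp.1.getElem _ _
  · intro u v l' h
    have := hmax u v l' h
    omega

theorem PF.nbr {x : ℕ → V} {m : ℕ} (hx : PF G x m)
    (hmax : ∀ u v l, IsPth G u v l → l.length ≤ m + 1) {y : V} (hy : G.Adj (x 0) y) :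
    ∃ k, 1 ≤ k ∧ k ≤ m ∧ x k = y := by
  by_contra hcon
  have hn : ∀ z ∈ [y], z ∉ seg x 0 m := by
    intro z hz hz'
    rw [List.mem_singleton] at hz
    subst hz
    obtain ⟨k, h1, h2, rfl⟩ := mem_seg.1 hz'
    refine hcon ⟨k, ?_, h2, rfl⟩
    by_contra hk
    obtain rfl : k = 0 := by omega
    exact G.loopless.irrefl _ hy
  have := hmax _ _ _ ((IsPth.sing y).app (hx.seg_pth (Nat.zero_le m) le_rfl) hy.symm hn)
  simp [length_seg] at this

theorem two_le_degree [DecidableRel G.Adj] (h2 : TwoConnected G) (v : V) : 2 ≤ G.degree v := by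
  classical
  have hcard : 3 ≤ Fintype.card V := by simpa using h2.1
  have key : ∀ w, w ≠ v → ∃ y, G.Adj v y ∧ y ≠ w := by
    intro w hw
    obtain ⟨b, hb⟩ : ∃ b, b ∉ ({v, w} : Finset V) := by
      by_contra! h
      have h3 : (Finset.univ : Finset V) ⊆ {v, w} := fun b _ => h b
      have h4 := Finset.card_le_card h3
      have h5 := Finset.card_le_two (a := v) (b := w)
      rw [Finset.card_univ] at h4
      omega
    simp only [Finset.mem_insert, Finset.mem_singleton, not_or] at hb
    obtain ⟨z, y, l, hp, hz, hy, hwl, hA, hB⟩ := bridge h2 w {v} {u | u ≠ v} (a := v) (b := b)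
      rfl hb.1 (Ne.symm hw) hb.2 (by simp)
    obtain rfl : z = v := hz
    match l, hp with
    | [], hp => 
      have := hp.2.2.2
      simp at this
      exact absurd this.symm hy
    | c :: t, hp => 
      have hc := (List.isChain_cons.1 hp.1).1 c (by simp)
      refine ⟨c, hc, ?_⟩
      rintro rfl
      simp at hwl
  obtain ⟨w, hw⟩ : ∃ w, w ≠ v := by
    have : Nontrivial V := Fintype.one_lt_card_iff_nontrivial.1 (by omega)
    exact exists_ne v
  obtain ⟨y1, h1, -⟩ := key w hw
  obtain ⟨y2, h3, h4⟩ := key y1 h1.ne'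
  rw [← G.card_neighborFinset_eq_degree]
  calc 2 = ({y1, y2} : Finset V).card := (Finset.card_pair h4.symm).symm
    _ ≤ _ := Finset.card_le_card (by
      intro z hz
      simp only [Finset.mem_insert, Finset.mem_singleton] at hz
      rw [mem_neighborFinset]
      rcases hz with rfl | rfl <;> assumption)

theorem case_cross [DecidableRel G.Adj] (h2 : TwoConnected G) {x : ℕ → V} {m : ℕ}
    (hx : PF G x m) (hmax : ∀ u v l, IsPth G u v l → l.length ≤ m + 1)
    (hn0 : ∀ y, G.Adj (x 0) y → ∃ k, 1 ≤ k ∧ k ≤ m ∧ x k = y)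
    (hnm : ∀ y, G.Adj (x m) y → ∃ k < m, x k = y)
    (hcr : ∃ i j, i < j ∧ j ≤ m ∧ G.Adj (x m) (x i) ∧ G.Adj (x 0) (x j)) :
    ∃ (v : V) (C : G.Walk v v), C.IsCycle ∧
      min (Fintype.card V) (2 * G.minDegree) ≤ C.length := by
  classical
  have key : ∃ d i j, i < j ∧ j ≤ m ∧ G.Adj (x m) (x i) ∧ G.Adj (x 0) (x j) ∧ j = i + d := by
    obtain ⟨i, j, h1, h3, h4, h5⟩ := hcr
    exact ⟨j - i, i, j, h1, h3, h4, h5, by omega⟩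
  obtain ⟨i, j, hij, hjm, hmi, h0j, hd⟩ := Nat.find_spec key
  have hmin : ∀ i' j', i' < j' → j' ≤ m → G.Adj (x m) (x i') → G.Adj (x 0) (x j') →
      j - i ≤ j' - i' := by
    intro i' j' h1 h3 h4 h5
    have := Nat.find_min' key (m := j' - i') ⟨i', j', h1, h3, h4, h5, by omega⟩
    omega
  clear hd
  have hd0 := G.minDegree_le_degree (x 0)
  have hdm := G.minDegree_le_degree (x m)
  have h20 := two_le_degree h2 (x 0)
  have h2m := two_le_degree h2 (x m)
  have hC : IsPth G (x 0) (x j) (seg x 0 i ++ (seg x j m).reverse) := by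
    refine (hx.seg_pth (Nat.zero_le i) (by omega)).app (hx.seg_pth hjm le_rfl).rev hmi.symm ?_
    intro z hz hz'
    rw [List.mem_reverse, mem_seg] at hz'
    rw [mem_seg] at hz
    obtain ⟨k, hk1, hk2, rfl⟩ := hz
    obtain ⟨k', hk1', hk2', h⟩ := hz'
    have := hx.inj k' (by omega) k (by omega) h
    omega
  have hlen : (seg x 0 i ++ (seg x j m).reverse).length = (i + 1) + (m + 1 - j) := by
    simp [length_seg]
  let I := (Finset.range m).filter (fun k => G.Adj (x 0) (x (k + 1)))
  let J := (Finset.range m).filter (fun k => G.Adj (x m) (x k))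
  have hI : G.degree (x 0) ≤ I.card := by
    rw [← G.card_neighborFinset_eq_degree]
    refine (Finset.card_le_card (t := I.image (fun k => x (k + 1))) ?_).trans Finset.card_image_le
    intro y hy
    rw [mem_neighborFinset] at hy
    obtain ⟨k, hk1, hk2, rfl⟩ := hn0 y hy
    have hk3 : k - 1 + 1 = k := by omega
    refine Finset.mem_image.2 ⟨k - 1, Finset.mem_filter.2 ⟨by simp; omega, ?_⟩, ?_⟩
    · rw [hk3]; exact hy
    · simp only [hk3]
  have hJ : G.degree (x m) ≤ J.card := by
    rw [← G.card_neighborFinset_eq_degree]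
    refine (Finset.card_le_card (t := J.image x) ?_).trans Finset.card_image_le
    intro y hy
    rw [mem_neighborFinset] at hy
    obtain ⟨k, hk1, rfl⟩ := hnm y hy
    exact Finset.mem_image.2 ⟨k, Finset.mem_filter.2 ⟨by simpa using hk1, hy⟩, rfl⟩
  by_cases hj : j = i + 1
  · -- cycle through all of the path
    have hIm : I.card ≤ m := (Finset.card_filter_le _ _).trans (by simp)
    obtain ⟨w, C, hCc, hCl⟩ := hC.cyc h0j.symm (by omega)
    refine ⟨w, C, hCc, (min_le_left _ _).trans ?_⟩
    rw [hCl]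
    by_contra hlt
    have hmem : ∀ k ≤ m, x k ∈ seg x 0 i ++ (seg x j m).reverse := by
      intro k hk
      rw [List.mem_append, List.mem_reverse, mem_seg, mem_seg]
      by_cases hki : k ≤ i
      · exact Or.inl ⟨k, by omega, hki, rfl⟩
      · exact Or.inr ⟨k, by omega, hk, rfl⟩
    generalize seg x 0 i ++ (seg x j m).reverse = L at *
    obtain ⟨b, hb⟩ : ∃ b, b ∉ L := by
      by_contra! h
      have h3 : (Finset.univ : Finset V) ⊆ L.toFinset := fun b _ => by simpa using h b
      have h4 := Finset.card_le_card h3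
      have := L.toFinset_card_le
      rw [Finset.card_univ] at h4
      omega
    obtain ⟨c, hc, hcb⟩ : ∃ c ∈ L, c ≠ b := ⟨x 0, hmem 0 (by omega), by
      rintro rfl; exact hb (hmem 0 (by omega))⟩
    -- avoid a vertex different from `b` and one vertex of `L`
    obtain ⟨w', hw1, hw2, hw3⟩ : ∃ w' c', c' ∈ L ∧ c' ≠ w' ∧ b ≠ w' := by
      refine ⟨x 1, x 0, hmem 0 (by omega), fun h => ?_, ?_⟩
      · have := hx.inj 0 (by omega) 1 (by omega) h; omega
      · rintro rfl; exact hb (hmem 1 (by omega))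
    obtain ⟨z, y, l, hp, hz, hy, hwl, hA, hB⟩ := bridge h2 w' {v | v ∈ L} {v | v ∉ L}
      hw2 hb hw3.1 hw3.2 (by simp)
    match l, hp with
    | [], hp =>
      have := hp.2.2.2
      simp at this
      subst this
      exact hy hz
    | c :: t, hp =>
      have hcz := (List.isChain_cons.1 hp.1).1 c (by simp)
      have hcL : c ∉ L := hA c (by simp)
      obtain ⟨e, l', hl', hml, hll⟩ := hC.rotate h0j.symm hz
      have := hmax _ _ _ ((IsPth.sing c).app hl' hcz.symm (by
        intro v hv hv'
        rw [List.mem_singleton] at hv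
        subst hv
        exact hcL ((hml _).1 hv')))
      simp at this
      omega
  · have hdisj : Disjoint I J := by
      rw [Finset.disjoint_left]
      intro k hkI hkJ
      simp only [I, J, Finset.mem_filter, Finset.mem_range] at hkI hkJ
      have := hmin k (k + 1) (by omega) (by omega) hkJ.2 hkI.2
      omega
    have hsub : insert m ((I ∪ J).erase (j - 1)) ⊆ Finset.range (i + 1) ∪ Finset.Icc j m := by
      intro k hk
      simp only [I, J, Finset.mem_insert, Finset.mem_erase, Finset.mem_union, Finset.mem_filter,
        Finset.mem_range, Finset.mem_Icc] at hk ⊢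
      rcases hk with rfl | ⟨hk, ⟨hkm, h⟩ | ⟨hkm, h⟩⟩
      · omega
      · by_contra hcon
        have := hmin i (k + 1) (by omega) (by omega) hmi h
        omega
      · by_contra hcon
        have := hmin k j (by omega) (by omega) h h0j
        omega
    have hc1 := Finset.card_le_card hsub
    have hc2 := Finset.card_union_le (Finset.range (i + 1)) (Finset.Icc j m)
    rw [Finset.card_insert_of_notMem (by simp [I, J])] at hc1
    have hc3 := Finset.pred_card_le_card_erase (s := I ∪ J) (a := j - 1)
    rw [Finset.card_union_of_disjoint hdisj] at hc3
    simp only [Finset.card_range, Nat.card_Icc] at hc2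
    obtain ⟨w, C, hCc, hCl⟩ := hC.cyc h0j.symm (by omega)
    refine ⟨w, C, hCc, (min_le_right _ _).trans ?_⟩
    omega

theorem case_nocross [DecidableRel G.Adj] (h2 : TwoConnected G) {x : ℕ → V} {m : ℕ}
    (hx : PF G x m)
    (hn0 : ∀ y, G.Adj (x 0) y → ∃ k, 1 ≤ k ∧ k ≤ m ∧ x k = y)
    (hnm : ∀ y, G.Adj (x m) y → ∃ k < m, x k = y)
    (hcr : ∀ i j, i < j → j ≤ m → G.Adj (x m) (x i) → ¬ G.Adj (x 0) (x j)) :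
    ∃ (v : V) (C : G.Walk v v), C.IsCycle ∧ 2 * G.minDegree ≤ C.length := by
  classical
  have hd0 := G.minDegree_le_degree (x 0)
  have hdm := G.minDegree_le_degree (x m)
  have h20 := two_le_degree h2 (x 0)
  have h2m := two_le_degree h2 (x m)
  obtain ⟨a, ha1, ham, h0a, hamax⟩ : ∃ a, 1 ≤ a ∧ a ≤ m ∧ G.Adj (x 0) (x a) ∧
      ∀ k ≤ m, G.Adj (x 0) (x k) → k ≤ a := by
    obtain ⟨y, hy⟩ := (G.degree_pos_iff_exists_adj (x 0)).1 (by omega)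
    obtain ⟨k, hk1, hk2, rfl⟩ := hn0 y hy
    let P : ℕ → Prop := fun k => G.Adj (x 0) (x k)
    have hs : P _ := Nat.findGreatest_spec (P := P) hk2 hy
    have hge : k ≤ _ := Nat.le_findGreatest (P := P) hk2 hy
    exact ⟨Nat.findGreatest P m, by omega, Nat.findGreatest_le _, hs,
      fun k' hk' h => Nat.le_findGreatest (P := P) hk' h⟩
  obtain ⟨b, hbm, hmb, hbmin⟩ : ∃ b < m, G.Adj (x m) (x b) ∧
      ∀ k ≤ m, G.Adj (x m) (x k) → b ≤ k := by
    obtain ⟨y, hy⟩ := (G.degree_pos_iff_exists_adj (x m)).1 (by omega)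
    obtain ⟨k, hk1, rfl⟩ := hnm y hy
    have key : ∃ k, G.Adj (x m) (x k) := ⟨k, hy⟩
    exact ⟨Nat.find key, (Nat.find_min' key hy).trans_lt hk1, Nat.find_spec key,
      fun k' hk' h => Nat.find_min' key h⟩
  have hab : a ≤ b := by
    by_contra h
    exact hcr b a (by omega) ham hmb h0a
  obtain ⟨R, R', α, β, q, L⟩ := hx.link h2 (a := a) (by omega) b hab hbm
  have hαβ : α ≠ β := by
    rintro rfl
    exact L.dis _ L.hR.head_mem L.hR'.head_mem
  have hqm := L.hqm
  have hbq := L.hq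
  have hα := L.hα
  have hβ := L.hβ
  obtain ⟨l, hl, hlk, hl0, hln⟩ := hx.sp (a := a) (α := β) (β := α) ham L.hβ L.hα hαβ.symm
    L.hor.symm h0a
  obtain ⟨l', hl', hlk', hl0', hln'⟩ := hx.reverse.sp (a := m - b) (α := m - b) (β := m - q)
    (by omega) le_rfl (by omega) (by omega) (Or.inl rfl) (by
      simp only [Nat.sub_zero, show m - (m - b) = b by omega]; exact hmb)
  simp only [Nat.sub_zero, show m - (m - b) = b by omega, show m - (m - q) = q by omega]
    at hl' hlk' hl0' hln'
  have hlk'2 : ∀ v ∈ l', ∃ k, b ≤ k ∧ k ≤ m ∧ x k = v := by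
    intro v hv
    obtain ⟨k, hk, rfl⟩ := hlk' v hv
    exact ⟨m - k, by omega, by omega, rfl⟩
  -- closed neighbourhoods
  let A := insert (x 0) (G.neighborFinset (x 0))
  let B := insert (x m) (G.neighborFinset (x m))
  have hA : A.card = G.degree (x 0) + 1 := by
    rw [Finset.card_insert_of_notMem (by simp), G.card_neighborFinset_eq_degree]
  have hB : B.card = G.degree (x m) + 1 := by
    rw [Finset.card_insert_of_notMem (by simp), G.card_neighborFinset_eq_degree]
  have hAl : ∀ v ∈ A, v ∈ l := by
    intro v hv
    rcases Finset.mem_insert.1 hv with rfl | hv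
    · exact hl0
    · rw [mem_neighborFinset] at hv
      obtain ⟨k, hk1, hk2, rfl⟩ := hn0 v hv
      exact hln k (hamax k hk2 hv) hv
  have hBl : ∀ v ∈ B, v ∈ l' := by
    intro v hv
    rcases Finset.mem_insert.1 hv with rfl | hv
    · exact hl0'
    · rw [mem_neighborFinset] at hv
      obtain ⟨k, hk1, rfl⟩ := hnm v hv
      have hk := hbmin k hk1.le hv
      have := hln' (m - k) (by omega)
      rw [show m - (m - k) = k by omega] at this
      exact this hv
  have hAB : (A ∩ B).card ≤ 1 := by
    rw [Finset.card_le_one]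
    have : ∀ v ∈ A ∩ B, v = x a := by
      intro v hv
      rw [Finset.mem_inter] at hv
      obtain ⟨k, hk, rfl⟩ := hlk v (hAl v hv.1)
      obtain ⟨k', h1, h3, h⟩ := hlk'2 _ (hBl _ hv.2)
      have := hx.inj k' h3 k (by omega) h
      obtain rfl : k = a := by omega
      rfl
    intro v hv w hw
    rw [this v hv, this w hw]
  have hll : 3 ≤ l.length := by
    have h1 : A.card ≤ l.toFinset.card := Finset.card_le_card fun v hv => by simpa using hAl v hv
    have := l.toFinset_card_le
    omega
  have hll' : 3 ≤ l'.length := by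
    have h1 : B.card ≤ l'.toFinset.card := Finset.card_le_card fun v hv => by simpa using hBl v hv
    have := l'.toFinset_card_le
    omega
  obtain ⟨M, s, e, rfl, hM, hs, he⟩ := hl.strip hll
  obtain ⟨M', s', e', rfl, hM', hs', he'⟩ := hl'.strip hll'
  have hnd := hl.2.1
  have hnd' := hl'.2.1
  simp only [List.nodup_cons, List.mem_append, List.mem_singleton, not_or] at hnd hnd'
  have hMα : x α ∉ M := fun h => (List.nodup_append'.1 hnd.2).2.2 h (by simp)
  have hMq : x q ∉ M' := fun h => (List.nodup_append'.1 hnd'.2).2.2 h (by simp)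
  have hMlow : ∀ v ∈ M, ∃ k ≤ a, k ≠ α ∧ k ≠ β ∧ x k = v := by
    intro v hv
    obtain ⟨k, hk, rfl⟩ := hlk v (by simp [hv])
    refine ⟨k, hk, ?_, ?_, rfl⟩
    · rintro rfl; exact hMα hv
    · rintro rfl; exact hnd.1.1 hv
  have hMhigh : ∀ v ∈ M', ∃ k, b ≤ k ∧ k ≤ m ∧ k ≠ b ∧ k ≠ q ∧ x k = v := by
    intro v hv
    obtain ⟨k, hk, hk', rfl⟩ := hlk'2 v (by simp [hv])
    refine ⟨k, hk, hk', ?_, ?_, rfl⟩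
    · rintro rfl; exact hnd'.1.1 hv
    · rintro rfl; exact hMq hv
  have d1 : ∀ v ∈ M, v ∉ R ∧ v ∉ R' := by
    intro v hv
    obtain ⟨k, hk, h1, h3, rfl⟩ := hMlow v hv
    exact ⟨fun h => h1 (L.lowR k hk h), fun h => h3 (L.lowR' k hk h)⟩
  have d2 : ∀ v ∈ M', v ∉ R ∧ v ∉ R' := by
    intro v hv
    obtain ⟨k, hk, hkm, h1, h3, rfl⟩ := hMhigh v hv
    exact ⟨fun h => h1 (L.highR k hkm hk h), fun h => h3 (L.highR' k hkm hk h)⟩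
  have d3 : ∀ v ∈ M, v ∉ M' := by
    intro v hv hv'
    obtain ⟨k, hk, h1, h3, rfl⟩ := hMlow v hv
    obtain ⟨k', hk', hkm, h4, h5, h⟩ := hMhigh _ hv'
    have := hx.inj k' hkm k (by omega) h
    omega
  have hC : IsPth G s (x β) (M ++ (R ++ (M' ++ R'.reverse))) := by
    refine hM.app (L.hR.app (hM'.app L.hR'.rev he' ?_) hs' ?_) he ?_
    · intro v hv hv'
      exact (d2 v hv).2 (by simpa using hv')
    · intro v hv hv'
      rcases List.mem_append.1 hv' with h | h
      · exact (d2 v h).1 hv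
      · exact L.dis v hv (by simpa using h)
    · intro v hv hv'
      rcases List.mem_append.1 hv' with h | h
      · exact (d1 v hv).1 h
      rcases List.mem_append.1 h with h | h
      · exact d3 v hv h
      · exact (d1 v hv).2 (by simpa using h)
  have hcount : (A ∪ B).card ≤ (M ++ (R ++ (M' ++ R'.reverse))).length := by
    refine (Finset.card_le_card (t := (M ++ (R ++ (M' ++ R'.reverse))).toFinset) ?_).trans
      (List.toFinset_card_le _)
    intro v hv
    have e1 := L.hR.head_mem
    have e2 := L.hR.last_mem
    have e3 := L.hR'.head_mem
    have e4 := L.hR'.last_mem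
    simp only [List.mem_toFinset, List.mem_append, List.mem_reverse]
    rcases Finset.mem_union.1 hv with hv | hv
    · have := hAl v hv
      simp only [List.mem_cons, List.mem_append, List.not_mem_nil, or_false] at this
      rcases this with rfl | h | rfl <;> tauto
    · have := hBl v hv
      simp only [List.mem_cons, List.mem_append, List.not_mem_nil, or_false] at this
      rcases this with rfl | h | rfl <;> tauto
  have hui := Finset.card_union_add_card_inter A B
  obtain ⟨w, C, hCc, hCl⟩ := hC.cyc hs (by omega)
  exact ⟨w, C, hCc, by omega⟩

end main

/-- Dirac: a simple 2-connected graph with minimum degree `δ` has a cycle of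
length at least `min |V(G)| (2δ)`. -/
theorem dirac_circumference {V : Type*} [Fintype V] (G : SimpleGraph V)
    [DecidableRel G.Adj] (h2 : TwoConnected G) :
    ∃ (v : V) (C : G.Walk v v), C.IsCycle ∧
      min (Fintype.card V) (2 * G.minDegree) ≤ C.length := by
  have hcard : 3 ≤ Fintype.card V := by simpa using h2.1
  have : Nonempty V := Fintype.card_pos_iff.1 (by omega)
  obtain ⟨x, m, hx, hmax⟩ := exists_longest (G := G)
  have hn0 : ∀ y, G.Adj (x 0) y → ∃ k, 1 ≤ k ∧ k ≤ m ∧ x k = y := fun y hy => hx.nbr hmax hy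
  have hnm : ∀ y, G.Adj (x m) y → ∃ k < m, x k = y := by
    intro y hy
    obtain ⟨k, h1, h3, h4⟩ := hx.reverse.nbr hmax (y := y) (by simpa using hy)
    exact ⟨m - k, by omega, h4⟩
  by_cases hcr : ∃ i j, i < j ∧ j ≤ m ∧ G.Adj (x m) (x i) ∧ G.Adj (x 0) (x j)
  · exact case_cross h2 hx hmax hn0 hnm hcr
  · obtain ⟨v, C, hC, hl⟩ := case_nocross h2 hx hn0 hnm
      (fun i j h1 h3 h4 h5 => hcr ⟨i, j, h1, h3, h4, h5⟩)
    exact ⟨v, C, hC, (min_le_right _ _).trans hl⟩
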